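/- Suppose next-token consistency holds at every time t with 1 ≤ t ≤ T−1 and transition consistency holds at every time t with 1 ≤ t ≤ T−2. Then for every t with 1 ≤ t ≤ T−1 and every w ∈ 𝒳^{T−t}, there exists a measurable function φ_w : H → ℝ such that μ[X_{t+1:T} = w ∣ σ(X_{1:t})] = φ_w(h_t) μ-almost surely; in particular, the conditional law of the future tokens given the full history admits a σ(h_t)-measurable version. -/

import Mathlib

open MeasureTheory ProbabilityTheory

noncomputable section

/-- The tuple of tokens `(X_{s+1}, …, X_{s+n})`. -/
def tup {Ω 𝒳 : Type*} (X : ℕ → Ω → 𝒳) (s n : ℕ) (ω : Ω) : Fin n → 𝒳 :=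
  fun i => X (s + 1 + (i : ℕ)) ω

/-- Real-valued indicator of a set. -/
def ind {Ω : Type*} (A : Set Ω) : Ω → ℝ := A.indicator 1

/-!
Backward induction along the sequence. Write the event `X_{t+1:t+n+1} = w` as `X_{t+1} = w 0`
together with the event that the following `n` tokens spell the tail of `w`. By induction the
conditional probability of the latter given `X_{1:t+1}` is a function of `h (t + 1)`. As `h (t + 1)`
is determined by `X_{1:t+1}`, transition consistency says that, up to null sets, it is already
determined by `(h t, X_{t+1})`, so this probability has the form `ψ (h t, X_{t+1})`. On
`X_{t+1} = w 0` it equals `ψ (h t, w 0)`, which can be pulled out of the conditional expectation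
given `X_{1:t}`; next-token consistency turns what remains into a function of `h t`.
-/

section EventuallyMeasurable

open Filter

variable {α E : Type*} [TopologicalSpace E] [TopologicalSpace.IsCompletelyMetrizableSpace E]
  [Nonempty E] {m : MeasurableSpace α} {l : Filter α} [CountableInterFilter l]

theorem exists_stronglyMeasurable_eventuallyEq {f : α → E}
    (hf : StronglyMeasurable[eventuallyMeasurableSpace m l] f) :
    ∃ g : α → E, StronglyMeasurable[m] g ∧ f =ᶠ[l] g := by
  induction f, hf using StronglyMeasurable.induction' with
  | const c => exact ⟨fun _ => c, stronglyMeasurable_const, .rfl⟩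
  | @pcw f₁ f₂ s _ _ hs ih₁ ih₂ =>
    classical
    obtain ⟨t, ht, hst⟩ := hs
    obtain ⟨g₁, hg₁, hfg₁⟩ := ih₁
    obtain ⟨g₂, hg₂, hfg₂⟩ := ih₂
    refine ⟨t.piecewise g₁ g₂, hg₁.piecewise ht hg₂, ?_⟩
    filter_upwards [hst.mem_iff, hfg₁, hfg₂] with x hx h₁ h₂
    simp only [Set.piecewise, hx, h₁, h₂]
  | @lim u f _ _ ih hlim =>
    choose v hv huv using ih
    refine ⟨fun x => limUnder atTop (v · x), .limUnder hv, ?_⟩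
    filter_upwards [eventually_countable_forall.2 huv] with x hx
    exact ((hlim x).congr hx).limUnder_eq.symm

end EventuallyMeasurable

section CondExp

variable {Ω H E : Type*} [MeasurableSpace H] [MeasurableSpace E]
  {m m' mΩ : MeasurableSpace Ω} {μ : Measure Ω} {Z : Ω → H} {Y : Ω → E} {f : Ω → ℝ}

theorem integrable_ind [IsFiniteMeasure μ] {A : Set Ω} (hA : MeasurableSet A) :
    Integrable (ind A) μ :=
  (integrable_const 1).indicator hA

theorem condExp_ind_of_measurableSet [IsFiniteMeasure μ] (hm : m ≤ mΩ) {A : Set Ω}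
    (hA : MeasurableSet[m] A) : μ[ind A | m] = ind A :=
  condExp_of_stronglyMeasurable hm (stronglyMeasurable_one.indicator hA)
    (integrable_ind (hm A hA))

theorem eventuallyMeasurableSet_of_condExp_ind_ae_eq {A : Set Ω}
    (hA : μ[ind A | m] =ᵐ[μ] ind A) : EventuallyMeasurableSet m (ae μ) A := by
  have hind : EventuallyMeasurable m (ae μ) (ind A) :=
    stronglyMeasurable_condExp.measurable.eventuallyMeasurable_of_eventuallyEq hA.symm
  let _ := eventuallyMeasurableSpace m (ae μ)
  exact (measurable_indicator_const_iff (1 : ℝ)).1 hind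

theorem eventuallyMeasurable_of_condExp_ind_ae_eq [IsFiniteMeasure μ] (hm' : m' ≤ mΩ)
    (hZ : Measurable[m'] Z) (hcond : ∀ B : Set H, MeasurableSet B →
      μ[ind {ω | Z ω ∈ B} | m] =ᵐ[μ] μ[ind {ω | Z ω ∈ B} | m']) :
    EventuallyMeasurable m (ae μ) Z := fun B hB =>
  eventuallyMeasurableSet_of_condExp_ind_ae_eq <|
    (hcond B hB).trans (.of_eq (condExp_ind_of_measurableSet hm' (hZ hB)))

/-- The conditional expectation of `f` given the σ-algebra `m` has a version of the form `φ ∘ Z`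
with `φ` measurable. For `m` the σ-algebra of the history and `Z` the hidden state, this says that
the hidden state retains all the information of the history that is relevant to predicting `f`. -/
def CondExpFactorsThrough (μ : Measure Ω) (m : MeasurableSpace Ω) (Z : Ω → H) (f : Ω → ℝ) : Prop :=
  ∃ φ : H → ℝ, Measurable φ ∧ μ[f | m] =ᵐ[μ] fun ω => φ (Z ω)

namespace CondExpFactorsThrough

theorem const [IsFiniteMeasure μ] (hm : m ≤ mΩ) (c : ℝ) :
    CondExpFactorsThrough μ m Z (fun _ => c) :=
  ⟨fun _ => c, measurable_const, .of_eq (condExp_const hm c)⟩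

theorem of_condExp_comap_ae_eq (hf : μ[f | MeasurableSpace.comap Z inferInstance] =ᵐ[μ] μ[f | m]) :
    CondExpFactorsThrough μ m Z f := by
  obtain ⟨φ, hφ, hfφ⟩ := (stronglyMeasurable_condExp (μ := μ) (f := f)
    (m := MeasurableSpace.comap Z inferInstance)).measurable.exists_eq_measurable_comp
  exact ⟨φ, hφ, hf.symm.trans (.of_eq hfφ)⟩

theorem trans_eventuallyMeasurable (hf : CondExpFactorsThrough μ m Z f)
    (hZ : EventuallyMeasurable (MeasurableSpace.comap Y inferInstance) (ae μ) Z) :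
    CondExpFactorsThrough μ m Y f := by
  obtain ⟨φ, hφ, hfφ⟩ := hf
  obtain ⟨g, hg, hφg⟩ := exists_stronglyMeasurable_eventuallyEq
    (hφ.comp_eventuallyMeasurable hZ).stronglyMeasurable
  obtain ⟨ψ, hψ, rfl⟩ := hg.measurable.exists_eq_measurable_comp
  exact ⟨ψ, hψ, hfφ.trans hφg⟩

theorem indicator_fiber [IsFiniteMeasure μ] [MeasurableSingletonClass E]
    (hmm' : m ≤ m') (hm' : m' ≤ mΩ) (hZ : Measurable[m] Z) (hY : Measurable[m'] Y)
    (hfint : Integrable f μ) (hf : CondExpFactorsThrough μ m' (fun ω => (Z ω, Y ω)) f) {a : E}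
    (ha : CondExpFactorsThrough μ m Z (ind {ω | Y ω = a})) :
    CondExpFactorsThrough μ m Z ({ω | Y ω = a}.indicator f) := by
  obtain ⟨ψ, hψ, hfψ⟩ := hf
  obtain ⟨χ, hχ, haχ⟩ := ha
  set A := {ω | Y ω = a}
  have hA : MeasurableSet[m'] A := hY (measurableSet_singleton a)
  have hψa : Measurable fun z => ψ (z, a) := hψ.comp measurable_prodMk_right
  have hinner : μ[A.indicator f | m'] =ᵐ[μ] (fun ω => ψ (Z ω, a)) * ind A := by
    filter_upwards [condExp_indicator hfint hA, hfψ] with ω hω hfω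
    rw [hω]
    by_cases hYω : Y ω = a <;> simp [A, ind, hYω, hfω]
  refine ⟨fun z => ψ (z, a) * χ z, hψa.mul hχ, ?_⟩
  calc μ[A.indicator f | m]
    _ =ᵐ[μ] μ[μ[A.indicator f | m'] | m] := (condExp_condExp_of_le hmm' hm').symm
    _ =ᵐ[μ] μ[(fun ω => ψ (Z ω, a)) * ind A | m] := condExp_congr_ae hinner
    _ =ᵐ[μ] (fun ω => ψ (Z ω, a)) * μ[ind A | m] :=
      condExp_mul_of_stronglyMeasurable_left (hψa.comp hZ).stronglyMeasurable
        (integrable_condExp.congr hinner) (integrable_ind (hm' A hA))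
    _ =ᵐ[μ] fun ω => ψ (Z ω, a) * χ (Z ω) := haχ.mono fun ω hω => by simp only [Pi.mul_apply, hω]

end CondExpFactorsThrough

end CondExp

section Tokens

variable {Ω 𝒳 : Type*} {X : ℕ → Ω → 𝒳}

theorem tup_succ (X : ℕ → Ω → 𝒳) (t n : ℕ) (ω : Ω) :
    tup X t (n + 1) ω = Fin.cons (X (t + 1) ω) (tup X (t + 1) n ω) := by
  funext i
  refine Fin.cases rfl (fun j => ?_) i
  simp only [tup, Fin.cons_succ, Fin.val_succ]
  congr 1
  omega

theorem ind_tup_succ (X : ℕ → Ω → 𝒳) (t n : ℕ) (w : Fin (n + 1) → 𝒳) :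
    ind {ω | tup X t (n + 1) ω = w} =
      {ω | X (t + 1) ω = w 0}.indicator (ind {ω | tup X (t + 1) n ω = Fin.tail w}) := by
  rw [ind, ind, Set.indicator_indicator]
  congr 1
  ext ω
  rw [Set.mem_ofPred_eq, tup_succ, ← Fin.cons_self_tail w, Fin.cons_inj]
  rfl

theorem ind_tup_zero (X : ℕ → Ω → 𝒳) (t : ℕ) (w : Fin 0 → 𝒳) :
    ind {ω | tup X t 0 ω = w} = fun _ => 1 := by
  simp only [Subsingleton.elim _ w, Set.ofPred_true, ind, Set.indicator_univ]
  rfl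

variable [MeasurableSpace 𝒳]

/-- The σ-algebra `σ(X_{1:t})` generated by the first `t` tokens. -/
abbrev history (X : ℕ → Ω → 𝒳) (t : ℕ) : MeasurableSpace Ω :=
  MeasurableSpace.comap (tup X 0 t) inferInstance

theorem measurable_history {s t : ℕ} (hs : 1 ≤ s) (hst : s ≤ t) :
    Measurable[history X t] (X s) := by
  have hXs : X s = (fun x : Fin t → 𝒳 => x ⟨s - 1, by omega⟩) ∘ tup X 0 t := by
    funext ω
    simp only [tup, Function.comp_apply]
    congr 1
    omega
  rw [hXs]
  exact (measurable_pi_apply _).comp (comap_measurable _)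

theorem measurable_tup {m : MeasurableSpace Ω} {s n : ℕ}
    (hX : ∀ t, s < t → t ≤ s + n → Measurable (X t)) : Measurable (tup X s n) :=
  measurable_pi_lambda _ fun i => hX _ (by omega) (by omega)

theorem history_mono (X : ℕ → Ω → 𝒳) : Monotone (history X) := fun s _ hst =>
  (measurable_tup fun _ h1 h2 => measurable_history h1 (by omega)).comap_le

theorem history_le {mΩ : MeasurableSpace Ω} (hX : ∀ t, Measurable (X t)) (t : ℕ) :
    history X t ≤ mΩ :=
  (measurable_tup fun s _ _ => hX s).comap_le

end Tokens

theorem conditional_law_factors_through_hidden_state_general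
    {Ω 𝒳 H : Type*} [MeasurableSpace Ω] [MeasurableSpace 𝒳] [MeasurableSingletonClass 𝒳]
    [MeasurableSpace H] (μ : Measure Ω) [IsFiniteMeasure μ] (T : ℕ)
    (X : ℕ → Ω → 𝒳) (hX : ∀ t, Measurable (X t))
    (h : ℕ → Ω → H) (hh : ∀ t, 1 ≤ t → t ≤ T → Measurable[history X t] (h t))
    (hnext : ∀ t, 1 ≤ t → t < T → ∀ a : 𝒳,
      μ[ind {ω | X (t + 1) ω = a} | MeasurableSpace.comap (h t) inferInstance]
        =ᵐ[μ] μ[ind {ω | X (t + 1) ω = a} | history X t])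
    (htrans : ∀ t, 1 ≤ t → t + 1 < T → ∀ B : Set H, MeasurableSet B →
      μ[ind {ω | h (t + 1) ω ∈ B} |
          MeasurableSpace.comap (fun ω => (h t ω, X (t + 1) ω)) inferInstance]
        =ᵐ[μ] μ[ind {ω | h (t + 1) ω ∈ B} | history X (t + 1)])
    (t n : ℕ) (ht : 1 ≤ t) (htn : t + n ≤ T) (w : Fin n → 𝒳) :
    CondExpFactorsThrough μ (history X t) (h t) (ind {ω | tup X t n ω = w}) := by
  induction n generalizing t with
  | zero => simpa only [ind_tup_zero] using .const (history_le hX t) 1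
  | succ n ih =>
    have hrest : CondExpFactorsThrough μ (history X (t + 1)) (fun ω => (h t ω, X (t + 1) ω))
        (ind {ω | tup X (t + 1) n ω = Fin.tail w}) := by
      -- There is no transition at the last step, but then the remaining word is empty.
      obtain rfl | hn := n.eq_zero_or_pos
      · simpa only [ind_tup_zero] using .const (history_le hX (t + 1)) 1
      · exact (ih (t + 1) (by omega) (by omega) _).trans_eventuallyMeasurable <|
          eventuallyMeasurable_of_condExp_ind_ae_eq (history_le hX (t + 1))
            (hh (t + 1) (by omega) (by omega)) (htrans t ht (by omega))
    have hrest_meas : MeasurableSet {ω | tup X (t + 1) n ω = Fin.tail w} :=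
      measurable_tup (fun r _ _ => hX r) (measurableSet_singleton _)
    rw [ind_tup_succ]
    exact hrest.indicator_fiber (history_mono X t.le_succ) (history_le hX (t + 1))
      (hh t ht (by omega)) (measurable_history (by omega) le_rfl) (integrable_ind hrest_meas)
      (.of_condExp_comap_ae_eq (hnext t ht (by omega) (w 0)))

/-- Under next-token consistency (all `1 ≤ t ≤ T-1`) and transition
consistency (all `1 ≤ t ≤ T-2`), for every `1 ≤ t ≤ T-1` and every future word
`w ∈ 𝒳^{T-t}` there is a measurable `φ_w : H → ℝ` with
`μ[X_{t+1:T} = w ∣ σ(X_{1:t})] = φ_w (h t)` μ-a.s. -/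
theorem conditional_law_factors_through_hidden_state
    {Ω 𝒳 H : Type*}
    [MeasurableSpace Ω] [MeasurableSpace 𝒳] [DiscreteMeasurableSpace 𝒳]
    [Fintype 𝒳] [Nonempty 𝒳]
    [MeasurableSpace H] [StandardBorelSpace H]
    (μ : Measure Ω) [IsProbabilityMeasure μ]
    (T : ℕ) (hT : 2 ≤ T)
    (X : ℕ → Ω → 𝒳) (hX : ∀ t, Measurable (X t))
    (h : ℕ → Ω → H) (g : (t : ℕ) → (Fin t → 𝒳) → H)
    (hg : ∀ t, 1 ≤ t → t ≤ T → Measurable (g t))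
    (hgh : ∀ t, 1 ≤ t → t ≤ T → ∀ ω, h t ω = g t (tup X 0 t ω))
    -- next-token consistency at every time `1 ≤ t ≤ T-1`
    (hnext : ∀ t, 1 ≤ t → t ≤ T - 1 → ∀ a : 𝒳,
      (μ[ind {ω | X (t + 1) ω = a} | MeasurableSpace.comap (h t) inferInstance])
        =ᵐ[μ]
      (μ[ind {ω | X (t + 1) ω = a} | MeasurableSpace.comap (tup X 0 t) inferInstance]))
    -- transition consistency at every time `1 ≤ t ≤ T-2`
    (htrans : ∀ t, 1 ≤ t → t ≤ T - 2 → ∀ B : Set H, MeasurableSet B →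
      (μ[ind {ω | h (t + 1) ω ∈ B} |
          MeasurableSpace.comap (fun ω => (h t ω, X (t + 1) ω)) inferInstance])
        =ᵐ[μ]
      (μ[ind {ω | h (t + 1) ω ∈ B} |
          MeasurableSpace.comap (tup X 0 (t + 1)) inferInstance])) :
    -- conclusion: the full-horizon conditional law admits a `σ(h t)`-measurable version
    ∀ t, 1 ≤ t → t ≤ T - 1 → ∀ w : Fin (T - t) → 𝒳,
      ∃ φ : H → ℝ, Measurable φ ∧
        (μ[ind {ω | tup X t (T - t) ω = w} |
            MeasurableSpace.comap (tup X 0 t) inferInstance])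
          =ᵐ[μ] (fun ω => φ (h t ω)) := by
  intro t h1 h2 w
  have hh (s : ℕ) (hs1 : 1 ≤ s) (hsT : s ≤ T) : Measurable[history X s] (h s) := by
    rw [funext (hgh s hs1 hsT)]
    exact (hg s hs1 hsT).comp (comap_measurable _)
  exact conditional_law_factors_through_hidden_state_general μ T X hX h hh
    (fun s hs1 hsT => hnext s hs1 (by omega)) (fun s hs1 hsT => htrans s hs1 (by omega))
    t (T - t) h1 (by omega) w
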